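/- Let m, n be positive integers and p a real number with p ≥ 1. If P(x) = ∑_{|α|=m} a_α x^α is an m-homogeneous polynomial on the real space ℓ_p^n with real coefficients a_α, and P_ℂ(z) = ∑_{|α|=m} a_α z^α denotes the same polynomial viewed on the complex space ℓ_p^n, then ‖P_ℂ‖ ≤ 2^{m−1}·‖P‖, where each norm is the supremum of the absolute value over the corresponding unit ball. -/

import Mathlib

open Finset

/-- The `ℓ_p` norm on `𝕜^n` for a real exponent `p`. -/
noncomputable def lpNorm {𝕜 : Type*} [RCLike 𝕜] {n : ℕ} (p : ℝ) (x : Fin n → 𝕜) : ℝ :=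
  (∑ i, ‖x i‖ ^ p) ^ (1 / p)

/-- The sup norm of the `m`-homogeneous polynomial with coefficients `a`
over the unit ball of `ℓ_p^n`. -/
noncomputable def polyNorm {𝕜 : Type*} [RCLike 𝕜] (p : ℝ) (m n : ℕ) (a : (Fin n → ℕ) → 𝕜) : ℝ :=
  sSup {y : ℝ | ∃ x : Fin n → 𝕜, lpNorm p x ≤ 1 ∧
    y = ‖∑ α ∈ Finset.Nat.antidiagonalTuple n m, a α * ∏ i, x i ^ α i‖}

lemma cnb_prod {n : ℕ} (s : Finset (Fin n)) (z c : Fin n → ℂ) (α : Fin n → ℕ) :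
    (∏ i ∈ s, (Polynomial.C (z i) * Polynomial.X + Polynomial.C (c i)) ^ α i).natDegree
      ≤ ∑ i ∈ s, α i ∧
    (∏ i ∈ s, (Polynomial.C (z i) * Polynomial.X + Polynomial.C (c i)) ^ α i).coeff
      (∑ i ∈ s, α i) = ∏ i ∈ s, z i ^ α i := by
  classical
  induction s using Finset.induction_on with
  | empty => simp
  | insert i s hi ih =>
    rw [Finset.prod_insert hi, Finset.sum_insert hi, Finset.prod_insert hi]
    have h1 : (Polynomial.C (z i) * Polynomial.X + Polynomial.C (c i)).natDegree ≤ 1 :=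
      Polynomial.natDegree_linear_le
    have h2 : ((Polynomial.C (z i) * Polynomial.X + Polynomial.C (c i)) ^ α i).natDegree
        ≤ α i := by
      simpa using Polynomial.natDegree_pow_le_of_le (α i) h1
    refine ⟨Polynomial.natDegree_mul_le_of_le h2 ih.1, ?_⟩
    rw [Polynomial.coeff_mul_add_eq_of_natDegree_le h2 ih.1, ih.2]
    congr 1
    have := Polynomial.coeff_pow_of_natDegree_le (n := 1) (m := α i) h1
    simpa using this

lemma cnb_avg (m : ℕ) (hm : 0 < m) (G : Polynomial ℂ) (hG : G.natDegree ≤ m) (B : ℝ)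
    (hB : ∀ w : ℂ, ‖w‖ = 1 → ‖G.eval (w ^ 2)‖ ≤ B) : ‖G.coeff 0 + G.coeff m‖ ≤ B := by
  have hζ := Complex.isPrimitiveRoot_exp m hm.ne'
  set ζ := Complex.exp (2 * Real.pi * Complex.I / m) with hζd
  have key : ∑ j ∈ range m, G.eval (ζ ^ j) = m * (G.coeff 0 + G.coeff m) := by
    have : ∀ j ∈ range m, G.eval (ζ ^ j) = ∑ k ∈ range (m + 1), G.coeff k * (ζ ^ k) ^ j := by
      intro j _
      rw [Polynomial.eval_eq_sum_range' (Nat.lt_succ_of_le hG)]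
      refine Finset.sum_congr rfl fun k _ => ?_
      rw [← pow_mul, ← pow_mul, mul_comm j k]
    rw [Finset.sum_congr rfl this, Finset.sum_comm]
    simp_rw [← Finset.mul_sum]
    have hs : ∀ f : ℕ → ℂ, ∑ k ∈ range m, f k = ∑ k ∈ range (m - 1), f (k + 1) + f 0 := by
      intro f
      rw [← Finset.sum_range_succ', Nat.sub_add_cancel hm]
    rw [Finset.sum_range_succ, hs (fun k => G.coeff k * _)]
    rw [Finset.sum_eq_zero, hζ.pow_eq_one]
    · simp; ring
    · intro k hk
      have hk' : k + 1 < m := by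
        have := Finset.mem_range.1 hk
        omega
      have hne : ζ ^ (k + 1) ≠ 1 := hζ.pow_ne_one_of_pos_of_lt (by omega) hk'
      have h0 : (∑ j ∈ range m, (ζ ^ (k + 1)) ^ j) * (ζ ^ (k + 1) - 1) = 0 := by
        rw [geom_sum_mul, ← pow_mul, mul_comm, pow_mul, hζ.pow_eq_one]; simp
      rcases mul_eq_zero.1 h0 with h | h
      · rw [h, mul_zero]
      · exact absurd (sub_eq_zero.1 h) hne
  have hb : ∀ j ∈ range m, ‖G.eval (ζ ^ j)‖ ≤ B := by
    intro j _
    have h := hB (Complex.exp ((Real.pi * j / m : ℝ) * Complex.I))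
      (Complex.norm_exp_ofReal_mul_I _)
    have e : Complex.exp ((Real.pi * j / m : ℝ) * Complex.I) ^ 2 = ζ ^ j := by
      rw [hζd, ← Complex.exp_nat_mul, ← Complex.exp_nat_mul]
      congr 1
      push_cast
      ring
    rwa [e] at h
  have h3 : ‖∑ j ∈ range m, G.eval (ζ ^ j)‖ ≤ m * B := by
    refine (norm_sum_le _ _).trans ((Finset.sum_le_sum hb).trans ?_)
    simp
  rw [key, norm_mul, Complex.norm_natCast] at h3
  exact le_of_mul_le_mul_left h3 (by exact_mod_cast hm)

lemma cnb_hom {R : Type*} [CommRing R] (m n : ℕ) (a : (Fin n → ℕ) → R) (c : R) (x : Fin n → R) :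
    ∑ α ∈ Finset.Nat.antidiagonalTuple n m, a α * ∏ i, (c * x i) ^ α i =
      c ^ m * ∑ α ∈ Finset.Nat.antidiagonalTuple n m, a α * ∏ i, x i ^ α i := by
  rw [Finset.mul_sum]
  refine Finset.sum_congr rfl fun α hα => ?_
  rw [Finset.Nat.mem_antidiagonalTuple] at hα
  simp_rw [mul_pow]
  rw [Finset.prod_mul_distrib, Finset.prod_pow_eq_pow_sum, hα]
  ring

lemma cnb_main (m n : ℕ) (hm : 0 < m) (a : (Fin n → ℕ) → ℝ) (z : Fin n → ℂ) (M : ℝ)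
    (hM : ∀ w : ℂ, ‖w‖ = 1 →
      ‖∑ α ∈ Finset.Nat.antidiagonalTuple n m, a α * ∏ i, ((w * z i).re) ^ α i‖ ≤ M) :
    ‖∑ α ∈ Finset.Nat.antidiagonalTuple n m, (a α : ℂ) * ∏ i, z i ^ α i +
      (starRingEnd ℂ) (∑ α ∈ Finset.Nat.antidiagonalTuple n m, (a α : ℂ) * ∏ i, z i ^ α i)‖
      ≤ 2 ^ m * M := by
  set G : Polynomial ℂ := ∑ α ∈ Finset.Nat.antidiagonalTuple n m,
    Polynomial.C (a α : ℂ) * ∏ i, (Polynomial.C (z i) * Polynomial.X +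
      Polynomial.C ((starRingEnd ℂ) (z i))) ^ α i with hGd
  have hdeg : G.natDegree ≤ m := by
    refine Polynomial.natDegree_sum_le_of_forall_le _ _ fun α hα => ?_
    rw [Finset.Nat.mem_antidiagonalTuple] at hα
    refine (Polynomial.natDegree_C_mul_le _ _).trans ?_
    rw [← hα]
    exact (cnb_prod univ z _ α).1
  have hcm : G.coeff m = ∑ α ∈ Finset.Nat.antidiagonalTuple n m, (a α : ℂ) * ∏ i, z i ^ α i := by
    rw [hGd, Polynomial.finsetSum_coeff]
    refine Finset.sum_congr rfl fun α hα => ?_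
    rw [Finset.Nat.mem_antidiagonalTuple] at hα
    rw [Polynomial.coeff_C_mul, ← (cnb_prod univ z (fun i => (starRingEnd ℂ) (z i)) α).2, hα]
  have hev : ∀ u, G.eval u = ∑ α ∈ Finset.Nat.antidiagonalTuple n m,
      (a α : ℂ) * ∏ i, (z i * u + (starRingEnd ℂ) (z i)) ^ α i := by
    intro u
    simp [hGd, Polynomial.eval_finsetSum, Polynomial.eval_prod]
  have hc0 : G.coeff 0 = (starRingEnd ℂ)
      (∑ α ∈ Finset.Nat.antidiagonalTuple n m, (a α : ℂ) * ∏ i, z i ^ α i) := by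
    rw [Polynomial.coeff_zero_eq_eval_zero, hev]
    simp
  have h := cnb_avg m hm G hdeg (2 ^ m * M) ?_
  · rwa [hc0, hcm, add_comm] at h
  intro w hw
  have hww : w * (starRingEnd ℂ) w = 1 := by
    rw [Complex.mul_conj, Complex.normSq_eq_norm_sq, hw]; simp
  have e : ∀ i, z i * w ^ 2 + (starRingEnd ℂ) (z i) = (2 * w) * (((w * z i).re : ℝ) : ℂ) := by
    intro i
    rw [Complex.re_eq_add_conj, map_mul]
    linear_combination (-(starRingEnd ℂ) (z i)) * hww
  rw [hev]
  simp_rw [e]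
  rw [cnb_hom, norm_mul, norm_pow, norm_mul, hw]
  have := hM w hw
  rw [← Complex.norm_real] at this
  push_cast at this
  simpa using this

lemma cnb_coord {n : ℕ} (p : ℝ) (hp : 1 ≤ p) (x : Fin n → ℝ) (hx : lpNorm p x ≤ 1) (i : Fin n) :
    ‖x i‖ ≤ 1 := by
  have hp0 : 0 < p := by linarith
  unfold lpNorm at hx
  have h1 : ‖x i‖ ^ p ≤ ∑ j, ‖x j‖ ^ p :=
    Finset.single_le_sum (f := fun j => ‖x j‖ ^ p) (fun j _ => by positivity) (Finset.mem_univ i)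
  have h2 : (‖x i‖ ^ p) ^ (1 / p) ≤ (∑ j, ‖x j‖ ^ p) ^ (1 / p) :=
    Real.rpow_le_rpow (by positivity) h1 (by positivity)
  rw [← Real.rpow_mul (norm_nonneg _), mul_one_div_cancel hp0.ne', Real.rpow_one] at h2
  exact h2.trans hx

lemma cnb_real (m n : ℕ) (p : ℝ) (hp : 1 ≤ p) (a : (Fin n → ℕ) → ℝ) (x : Fin n → ℝ)
    (hx : lpNorm p x ≤ 1) :
    ‖∑ α ∈ Finset.Nat.antidiagonalTuple n m, a α * ∏ i, x i ^ α i‖ ≤ polyNorm (𝕜 := ℝ) p m n a := by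
  refine le_csSup ⟨∑ α ∈ Finset.Nat.antidiagonalTuple n m, ‖a α‖, ?_⟩ ⟨x, hx, rfl⟩
  rintro y ⟨x, hx, rfl⟩
  refine (norm_sum_le _ _).trans (Finset.sum_le_sum fun α _ => ?_)
  rw [norm_mul, norm_prod]
  refine mul_le_of_le_one_right (norm_nonneg _) (Finset.prod_le_one (fun _ _ => norm_nonneg _) ?_)
  intro i _
  rw [norm_pow]
  exact pow_le_one₀ (norm_nonneg _) (cnb_coord p hp x hx i)

/-- If `P` is an `m`-homogeneous polynomial with real coefficients on the
real space `ℓ_p^n` and `P_ℂ` is the same polynomial on the complex space `ℓ_p^n`, then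
`‖P_ℂ‖ ≤ 2^{m-1} ‖P‖`. -/
theorem complexification_norm_bound (m n : ℕ) (hm : 0 < m) (hn : 0 < n)
    (p : ℝ) (hp : 1 ≤ p) (a : (Fin n → ℕ) → ℝ) :
    polyNorm (𝕜 := ℂ) p m n (fun α => (a α : ℂ)) ≤ 2 ^ (m - 1) * polyNorm (𝕜 := ℝ) p m n a := by
  have hp0 : 0 < p := by linarith
  have hnn : 0 ≤ polyNorm (𝕜 := ℝ) p m n a := by
    refine Real.sSup_nonneg ?_
    rintro y ⟨x, _, rfl⟩
    exact norm_nonneg _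
  refine Real.sSup_le ?_ (by positivity)
  rintro y ⟨z, hz, rfl⟩
  set A := ∑ α ∈ Finset.Nat.antidiagonalTuple n m, (a α : ℂ) * ∏ i, z i ^ α i with hA
  obtain ⟨c, hc, hcA⟩ : ∃ c : ℂ, ‖c‖ = 1 ∧ c ^ m * A = (‖A‖ : ℂ) := by
    refine ⟨Complex.exp ((-A.arg / m : ℝ) * Complex.I), Complex.norm_exp_ofReal_mul_I _, ?_⟩
    conv_lhs => rhs; rw [← Complex.norm_mul_exp_arg_mul_I A]
    rw [← Complex.exp_nat_mul, mul_left_comm, ← Complex.exp_add]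
    have hm' : (m : ℂ) ≠ 0 := by exact_mod_cast hm.ne'
    have : (m : ℂ) * ((-A.arg / m : ℝ) * Complex.I) + A.arg * Complex.I = 0 := by
      push_cast
      field_simp
      ring
    rw [this]; simp
  have h := cnb_main m n hm a (fun i => c * z i) (polyNorm (𝕜 := ℝ) p m n a) ?_
  · rw [cnb_hom, ← hA, hcA, Complex.conj_ofReal, ← Complex.ofReal_add, Complex.norm_real,
      Real.norm_of_nonneg (by positivity)] at h
    obtain ⟨k, rfl⟩ : ∃ k, m = k + 1 := ⟨m - 1, by omega⟩
    rw [pow_succ] at h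
    simp only [Nat.add_sub_cancel]
    linarith
  · intro w hw
    refine cnb_real m n p hp a (fun i => (w * (c * z i)).re) (le_trans ?_ hz)
    unfold lpNorm
    refine Real.rpow_le_rpow (by positivity) (Finset.sum_le_sum fun i _ => ?_) (by positivity)
    refine Real.rpow_le_rpow (norm_nonneg _) ?_ hp0.le
    refine (Complex.abs_re_le_norm _).trans ?_
    rw [norm_mul, norm_mul, hw, hc]; simp
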